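/- arXiv:1106.3760 — 5 statements merged into one kernel-verified Lean document; each statement's English description precedes it below -/
import Mathlib

section
/- Let X be a finite group and Q a normal subgroup of X with C_X(Q) ≤ Q. Then every prime dividing the order of the subgroup C_{Aut(X)}(Q) of Aut(X) divides |Z(Q)|. Equivalently, if p is a prime not dividing |Z(Q)| and α is an automorphism of X of p-power order that fixes Q pointwise, then α is the identity. -/
/-!
If `α` fixes the normal subgroup `Q` pointwise, then comparing `α` with the identity on the
conjugates `x q x⁻¹` shows that `x⁻¹ * α x` centralizes `Q`; as `C_X(Q) ≤ Q`, it lies in `Z(Q)`.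
Since such `α` also fix these elements, `α ↦ (x ↦ x⁻¹ * α x)` is a homomorphism. It embeds
`C_{Aut(X)}(Q)` into a power of `Z(Q)`, so an automorphism of prime order `p` has a coordinate of
order `p` in `Z(Q)`.
-/

theorem exists_orderOf_apply_eq_prime {ι : Type*} {G : ι → Type*} [∀ i, Monoid (G i)] {p : ℕ}
    [Fact p.Prime] {f : ∀ i, G i} (hf : orderOf f = p) : ∃ i, orderOf (f i) = p := by
  have hp : p ≠ 1 := (Fact.out : p.Prime).ne_one
  have hf_ne : f ≠ 1 := fun h => hp (by rw [← hf, h, orderOf_one])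
  obtain ⟨i, hi⟩ := Function.ne_iff.mp hf_ne
  have hpow : f ^ p = 1 := hf ▸ pow_orderOf_eq_one f
  exact ⟨i, orderOf_eq_prime (congrFun hpow i) hi⟩

section FixingSubgroup

variable {X : Type*} [Group X] {Q : Subgroup X} [Q.Normal]

theorem inv_mul_apply_mem_centralizer {F : Type*} [FunLike F X X] [MonoidHomClass F X X] {f : F}
    (hf : ∀ q ∈ Q, f q = q) (x : X) : x⁻¹ * f x ∈ Subgroup.centralizer (Q : Set X) := by
  refine Subgroup.mem_centralizer_iff.mpr fun q hq => ?_
  have hconj : f x * q * (f x)⁻¹ = x * q * x⁻¹ := by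
    simpa only [map_mul, map_inv, hf q hq] using
      hf (x * q * x⁻¹) (‹Q.Normal›.conj_mem q hq x)
  calc q * (x⁻¹ * f x) = x⁻¹ * (x * q * x⁻¹) * f x := by group
    _ = x⁻¹ * (f x * q * (f x)⁻¹) * f x := by rw [hconj]
    _ = x⁻¹ * f x * q := by group

/-- The embedding of `C_{Aut(X)}(Q)` into the group of functions `X → Z(Q)` that sends `α` to the
displacement function `x ↦ x⁻¹ * α x`. -/
def displacement (hC : Subgroup.centralizer (Q : Set X) ≤ Q) :
    fixingSubgroup (MulAut X) (Q : Set X) →* (X → Subgroup.center Q) :=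
  have hmem (α : fixingSubgroup (MulAut X) (Q : Set X)) (x : X) :
      x⁻¹ * α.1 x ∈ Subgroup.centralizer (Q : Set X) :=
    inv_mul_apply_mem_centralizer ((mem_fixingSubgroup_iff _).mp α.2) x
  { toFun α x := ⟨⟨x⁻¹ * α.1 x, hC (hmem α x)⟩, Subgroup.mem_center_iff.mpr fun q =>
      Subtype.ext (Subgroup.mem_centralizer_iff.mp (hmem α x) q q.2)⟩
    map_one' := by
      ext x
      exact inv_mul_cancel x
    map_mul' α β := by
      ext x
      have hfix : α.1 (x⁻¹ * β.1 x) = x⁻¹ * β.1 x :=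
        (mem_fixingSubgroup_iff _).mp α.2 _ (hC (hmem β x))
      calc x⁻¹ * α.1 (β.1 x) = x⁻¹ * α.1 (x * (x⁻¹ * β.1 x)) := by rw [mul_inv_cancel_left]
        _ = x⁻¹ * α.1 x * (x⁻¹ * β.1 x) := by rw [map_mul, hfix, mul_assoc] }

theorem displacement_injective (hC : Subgroup.centralizer (Q : Set X) ≤ Q) :
    Function.Injective (displacement hC) := by
  intro α β h
  ext x
  exact mul_left_cancel (congrArg (fun z : Subgroup.center Q => (z : X)) (congrFun h x))

theorem exists_center_orderOf_eq_prime (hC : Subgroup.centralizer (Q : Set X) ≤ Q) {p : ℕ}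
    [Fact p.Prime] {α : fixingSubgroup (MulAut X) (Q : Set X)} (hα : orderOf α = p) :
    ∃ z : Subgroup.center Q, orderOf z = p := by
  have hdisp : orderOf (displacement hC α) = p :=
    (orderOf_injective _ (displacement_injective hC) α).trans hα
  obtain ⟨x, hx⟩ := exists_orderOf_apply_eq_prime hdisp
  exact ⟨displacement hC α x, hx⟩

end FixingSubgroup

theorem aut_centralizing_fitting_primes_general {X : Type*} [Group X]
    (Q : Subgroup X) (hQ : Q.Normal) (hC : Subgroup.centralizer (Q : Set X) ≤ Q) :
    (Finite {α : MulAut X // ∀ q ∈ Q, α q = q} → ∀ p : ℕ, p.Prime →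
      p ∣ Nat.card {α : MulAut X // ∀ q ∈ Q, α q = q} →
      ∃ z : Subgroup.center Q, orderOf z = p) ∧
    (∀ p : ℕ, p.Prime → (¬ ∃ z : Subgroup.center Q, orderOf z = p) →
      ∀ α : MulAut X, (∃ n : ℕ, orderOf α = p ^ n) →
        (∀ q ∈ Q, α q = q) → α = 1) := by
  constructor
  · intro hfin p hp hdvd
    have : Fact p.Prime := ⟨hp⟩
    let e : {α : MulAut X // ∀ q ∈ Q, α q = q} ≃ fixingSubgroup (MulAut X) (Q : Set X) :=
      Equiv.subtypeEquivRight fun _ => (mem_fixingSubgroup_iff (MulAut X)).symm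
    have : Finite (fixingSubgroup (MulAut X) (Q : Set X)) := .of_equiv _ e
    obtain ⟨α, hα⟩ := exists_prime_orderOf_dvd_card' p (Nat.card_congr e ▸ hdvd)
    exact exists_center_orderOf_eq_prime hC hα
  · rintro p hp hcenter α ⟨n, hn⟩ hfix
    have : Fact p.Prime := ⟨hp⟩
    by_contra hα
    have hn0 : n ≠ 0 := fun h => hα (orderOf_eq_one_iff.mp (by rw [hn, h, pow_zero]))
    let β : fixingSubgroup (MulAut X) (Q : Set X) := ⟨α, (mem_fixingSubgroup_iff _).mpr hfix⟩
    have hβ : orderOf β = p ^ n := (Subgroup.orderOf_mk α _).trans hn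
    have hβ_pow : orderOf (β ^ (orderOf β / p)) = p :=
      orderOf_pow_orderOf_div (hβ ▸ (pow_pos hp.pos n).ne') (hβ ▸ dvd_pow_self p hn0)
    exact hcenter (exists_center_orderOf_eq_prime hC hβ_pow)

/-- Lemma 2.1(a): Let `X` be a finite group and `Q` a normal subgroup with `C_X(Q) ≤ Q`
(i.e. `F*(X) = Q`). Then every prime dividing the order of `C_{Aut(X)}(Q)` divides `|Z(Q)|`;
equivalently, any automorphism of `p`-power order (for a prime `p` not dividing `|Z(Q)|`)
fixing `Q` pointwise is the identity. -/
theorem aut_centralizing_fitting_primes {X : Type*} [Group X] [Finite X]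
    (Q : Subgroup X) (hQ : Q.Normal)
    (hC : Subgroup.centralizer (Q : Set X) ≤ Q) :
    (∀ p : ℕ, p.Prime →
      p ∣ Nat.card {α : MulAut X // ∀ q ∈ Q, α q = q} →
      p ∣ Nat.card (Subgroup.center Q)) ∧
    (∀ p : ℕ, p.Prime → ¬ p ∣ Nat.card (Subgroup.center Q) →
      ∀ α : MulAut X, (∃ n : ℕ, orderOf α = p ^ n) →
        (∀ q ∈ Q, α q = q) → α = 1) := by
  have hdvd {p : ℕ} : (∃ z : Subgroup.center Q, orderOf z = p) → p ∣ Nat.card (Subgroup.center Q) :=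
    fun ⟨z, hz⟩ => hz ▸ orderOf_dvd_natCard z
  exact (aut_centralizing_fitting_primes_general Q hQ hC).imp
    (fun h p hp hp_dvd => hdvd (h inferInstance p hp hp_dvd))
    (fun h p hp hp_ndvd => h p hp (mt hdvd hp_ndvd))
end

section
/- Let X be a finite group, p a prime, Q a normal p-subgroup of X with C_X(Q) ≤ Q, and P a Sylow p-subgroup of X. Then an automorphism α of X fixes P pointwise if and only if α = conj(z) for some z ∈ Z(P). In particular C_{Aut(X)}(P) = {conj(z) : z ∈ Z(P)}. -/
/-!
If `f` fixes `P` pointwise, it fixes `Q ≤ P` pointwise, so `x ↦ f x * x⁻¹` takes values in the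
abelian normal `p`-subgroup `C_X(Q)`. It is a 1-cocycle for conjugation which is trivial on `P`.
Multiplying over the cosets of `P` shows that its `[X : P]`-th power is a coboundary; since `p` does
not divide `[X : P]`, the cocycle itself is a coboundary, which says that `f` is conjugation by an
element of `C_X(Q)`.
-/

open Function groupCohomology Subgroup

section Cocycles

theorem isMulCoboundary₁_of_pow {G M : Type*} [Monoid G] [CommGroup M] [MulDistribMulAction G M]
    {n : ℕ} (hn : Bijective fun m : M ↦ m ^ n) {f : G → M}
    (hf : IsMulCoboundary₁ fun g ↦ f g ^ n) : IsMulCoboundary₁ f := by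
  obtain ⟨y, hy⟩ := hf
  obtain ⟨x, rfl⟩ := hn.surjective y
  refine ⟨x, fun g ↦ hn.injective ?_⟩
  calc (g • x / x) ^ n = g • x ^ n / x ^ n := by rw [div_pow, smul_pow']
    _ = f g ^ n := hy g

variable {G M : Type*} [Group G] [CommGroup M] [MulDistribMulAction G M] {H : Subgroup G}
  [H.FiniteIndex] {f : G → M}

theorem isMulCoboundary₁_pow_index_of_restrict (hf : IsMulCocycle₁ f)
    (hH : IsMulCoboundary₁ fun h : H ↦ f h) : IsMulCoboundary₁ fun g ↦ f g ^ H.index := by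
  have : Fintype (G ⧸ H) := H.fintypeQuotientOfFiniteIndex
  obtain ⟨x, hx⟩ := hH
  have right_invariant (g : G) (h : H) : (g * h) • x / f (g * h) = g • x / f g := by
    have hfh : f h = (h : G) • x / x := (hx h).symm
    rw [hf, hfh, smul_div', mul_smul, ← div_div, div_div_cancel]
  let F : G ⧸ H → M := Quotient.lift (fun g ↦ g • x / f g) fun a b hab ↦ by
    simpa using (right_invariant a ⟨a⁻¹ * b, QuotientGroup.leftRel_apply.1 hab⟩).symm
  have F_smul (g : G) (c : G ⧸ H) : F (g • c) = g • F c / f g := by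
    induction c using QuotientGroup.induction_on with
    | H k =>
      change (g * k) • x / f (g * k) = g • (k • x / f k) / f g
      rw [hf, smul_div', mul_smul, div_div]
  have prod_F (g : G) : ∏ c, F c = g • (∏ c, F c) / f g ^ H.index := calc
    ∏ c, F c = ∏ c, F (g • c) := (Equiv.prod_comp (MulAction.toPerm g) F).symm
    _ = g • (∏ c, F c) / f g ^ H.index := by
      simp only [F_smul, Finset.prod_div_distrib, Finset.smul_prod', Finset.prod_const,
        Finset.card_univ, index_eq_card, Nat.card_eq_fintype_card]
  exact ⟨∏ c, F c, fun g ↦ div_eq_of_eq_mul' (eq_div_iff_mul_eq'.1 (prod_F g)).symm⟩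

theorem isMulCoboundary₁_of_restrict (hpow : Bijective fun m : M ↦ m ^ H.index)
    (hf : IsMulCocycle₁ f) (hH : IsMulCoboundary₁ fun h : H ↦ f h) : IsMulCoboundary₁ f :=
  isMulCoboundary₁_of_pow hpow (isMulCoboundary₁_pow_index_of_restrict hf hH)

end Cocycles

section Endomorphisms

variable {G : Type*} [Group G]

theorem conj_fixes_iff_mem_centralizer {S : Set G} {z : G} :
    (∀ x ∈ S, MulAut.conj z x = x) ↔ z ∈ centralizer S :=
  forall₂_congr fun x _ ↦ by rw [MulAut.conj_apply, mul_inv_eq_iff_eq_mul, eq_comm]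

theorem apply_mul_inv_mem_centralizer {N : Subgroup G} [N.Normal] {f : G →* G}
    (hf : ∀ n ∈ N, f n = n) (g : G) : f g * g⁻¹ ∈ centralizer (N : Set G) := by
  refine mem_centralizer_iff.2 fun n hn ↦ ?_
  have hconj : (f g)⁻¹ * n * f g = g⁻¹ * n * g := by
    have hmem : g⁻¹ * n * g ∈ N := Normal.conj_mem' ‹_› n hn g
    simpa only [map_mul, map_inv, hf n hn] using hf _ hmem
  calc n * (f g * g⁻¹) = f g * ((f g)⁻¹ * n * f g) * g⁻¹ := by group
    _ = f g * g⁻¹ * n := by rw [hconj]; group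

open scoped IsMulCommutative in
theorem exists_eq_conj_of_apply_mul_inv_mem {A H : Subgroup G} [A.Normal] [IsMulCommutative A]
    [H.FiniteIndex] (hpow : Bijective fun a : A ↦ a ^ H.index) {f : G →* G}
    (hfA : ∀ g, f g * g⁻¹ ∈ A) (hfH : ∀ h ∈ H, f h = h) :
    ∃ a ∈ A, f = (MulAut.conj a).toMonoidHom := by
  let _ : MulDistribMulAction G A :=
    MulDistribMulAction.compHom A (MulAut.conjNormal : G →* MulAut A)
  have coe_smul (g : G) (a : A) : ((g • a : A) : G) = g * a * g⁻¹ := MulAut.conjNormal_apply g a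
  let d (g : G) : A := ⟨f g * g⁻¹, hfA g⟩
  have d_cocycle : IsMulCocycle₁ d := fun g k ↦ by
    rw [mul_comm]
    ext
    simp only [d, coe_mul, coe_smul, map_mul]
    group
  have d_restrict : IsMulCoboundary₁ fun h : H ↦ d h :=
    ⟨1, fun h ↦ Subtype.ext (by simp [d, hfH h h.2])⟩
  obtain ⟨a, ha⟩ := isMulCoboundary₁_of_restrict hpow d_cocycle d_restrict
  refine ⟨a⁻¹, inv_mem a.2, MonoidHom.ext fun g ↦ ?_⟩
  have hd : f g * g⁻¹ = (a : G)⁻¹ * (g * a * g⁻¹) := by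
    simpa [d, coe_smul, div_eq_inv_mul] using (congrArg Subtype.val (ha g)).symm
  calc f g = f g * g⁻¹ * g := by group
    _ = MulAut.conj (a : G)⁻¹ g := by rw [hd, MulAut.conj_apply]; group

theorem fixes_iff_exists_eq_conj {Q H : Subgroup G} [Q.Normal] (hQH : Q ≤ H)
    [IsMulCommutative (centralizer (Q : Set G))] [H.FiniteIndex]
    (hpow : Bijective fun a : centralizer (Q : Set G) ↦ a ^ H.index) (f : G →* G) :
    (∀ h ∈ H, f h = h) ↔ ∃ z ∈ centralizer (H : Set G), f = (MulAut.conj z).toMonoidHom := by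
  refine ⟨fun hf ↦ ?_, ?_⟩
  · obtain ⟨z, -, rfl⟩ := exists_eq_conj_of_apply_mul_inv_mem hpow
      (apply_mul_inv_mem_centralizer fun q hq ↦ hf q (hQH hq)) hf
    exact ⟨z, conj_fixes_iff_mem_centralizer.1 hf, rfl⟩
  · rintro ⟨z, hz, rfl⟩
    exact conj_fixes_iff_mem_centralizer.2 hz

end Endomorphisms

theorem aut_centralizing_sylow_of_pgroup_fitting_general {X : Type*} [Group X] {p : ℕ}
    [Fact p.Prime] (Q : Subgroup X) (hQ : Q.Normal) (hQp : IsPGroup p Q)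
    (hC : centralizer (Q : Set X) ≤ Q) (P : Sylow p X) [(P : Subgroup X).FiniteIndex]
    (f : X →* X) :
    (∀ x ∈ (P : Subgroup X), f x = x) ↔
      ∃ z ∈ (P : Subgroup X) ⊓ centralizer ((P : Subgroup X) : Set X),
        f = (MulAut.conj z).toMonoidHom := by
  have hQP : Q ≤ P := hQp.le_sylow_of_normal P
  have hCP : centralizer ((P : Subgroup X) : Set X) ≤ P :=
    (centralizer_le hQP).trans (hC.trans hQP)
  have : IsMulCommutative (centralizer (Q : Set X)) :=
    .of_setLike_mul_comm fun a ha _ hb ↦ mem_centralizer_iff.1 hb a (hC ha)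
  have hpow : Bijective fun a : centralizer (Q : Set X) ↦ a ^ (P : Subgroup X).index :=
    ((hQp.to_le hC).powEquiv' P.not_dvd_index).bijective
  rw [inf_eq_right.2 hCP]
  exact fixes_iff_exists_eq_conj hQP hpow f

/-- Lemma 2.1(b): Let `X` be a finite group, `p` a prime, `Q` a normal `p`-subgroup of `X`
with `C_X(Q) ≤ Q` (i.e. `F*(X)` is a `p`-group), and `P` a Sylow `p`-subgroup of `X`.
Then an automorphism `α` of `X` fixes `P` pointwise if and only if `α` is conjugation by
some element of `Z(P)`; that is, `C_{Aut(X)}(P) = Aut_{Z(P)}(X)`. -/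
theorem aut_centralizing_sylow_of_pgroup_fitting {X : Type*} [Group X] [Finite X]
    {p : ℕ} [Fact p.Prime] (Q : Subgroup X) (hQ : Q.Normal) (hQp : IsPGroup p Q)
    (hC : Subgroup.centralizer (Q : Set X) ≤ Q) (P : Sylow p X) (α : MulAut X) :
    (∀ x ∈ (P : Subgroup X), α x = x) ↔
      ∃ z ∈ (P : Subgroup X) ⊓ Subgroup.centralizer ((P : Subgroup X) : Set X),
        α = MulAut.conj z := by
  simpa only [MulEquiv.toMonoidHom_injective.eq_iff, MulEquiv.coe_toMonoidHom] using
    aut_centralizing_sylow_of_pgroup_fitting_general Q hQ hQp hC P α.toMonoidHom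
end

section
/- Let X be a finite group, p a prime, and Q a normal subgroup of X that is an extraspecial p-group, with C_X(Q) = Z(Q). Suppose there is a perfect normal subgroup Y of X (i.e. Y = [Y,Y]) such that p does not divide the index |X : QY|. Then: (i) every automorphism α of X with α(Q) = Q and α(q)q⁻¹ ∈ Z(Q) for all q ∈ Q equals conj(q₀) for some q₀ ∈ Q; and (ii) every automorphism of X fixing Q pointwise equals conj(z) for some z ∈ Z(Q). -/
/-- A `p`-group is extraspecial if its center, derived subgroup and Frattini subgroup
coincide and have order `p`. -/
def IsExtraspecial (p : ℕ) (Q : Type*) [Group Q] : Prop :=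
  IsPGroup p Q ∧ Subgroup.center Q = commutator Q ∧ Subgroup.center Q = frattini Q ∧
    Nat.card (Subgroup.center Q) = p

/-!
If `α` acts trivially on `Q/Z(Q)`, then `q ↦ α(q)q⁻¹` is a homomorphism `Q → Z(Q)`. The commutator
pairing embeds `Q/Z(Q) = Q/Q'` into `Hom(Q, Z(Q)) = Hom(Q/Q', Z(Q))`, and duality for finite abelian
groups bounds the order of the latter by `|Q/Q'|`. So every such homomorphism is `q ↦ [g, q]` for
some `g ∈ Q`, and `conj(g)⁻¹α` fixes `Q` pointwise.

If `α` fixes `Q` pointwise, then `x ↦ α(x)x⁻¹` is a 1-cocycle of `X` with values in the cyclic group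
`C_X(Q)`. As the automorphism group of a cyclic group is abelian, `Y` centralizes `C_X(Q)`, so
the cocycle is a homomorphism on `Y`, hence trivial there. A cocycle that is trivial on a subgroup
of index prime to the order of the coefficients is a coboundary, by averaging over the cosets, and
so `α` is conjugation by an element of `C_X(Q)`.
-/

section MonoidHom

variable {G H : Type*} [Group G] [Group H]

theorem card_monoidHom_le_of_isCyclic (A C : Type*) [CommGroup A] [Finite A] [CommGroup C]
    [Finite C] [IsCyclic C] : Nat.card (A →* C) ≤ Nat.card A := by
  have : NeZero (Nat.card C) := ⟨Nat.card_pos.ne'⟩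
  let e : C ≃* rootsOfUnity (Nat.card C) ℂ :=
    mulEquivOfCyclicCardEq (Complex.card_rootsOfUnity _).symm
  let ι : C →* ℂˣ := (rootsOfUnity (Nat.card C) ℂ).subtype.comp e.toMonoidHom
  have hι : Function.Injective ι := Subtype.val_injective.comp e.injective
  have card_dual : Nat.card (A →* ℂˣ) = Nat.card A :=
    CommGroup.card_monoidHom_of_hasEnoughRootsOfUnity A ℂ
  have : Finite (A →* ℂˣ) := Nat.finite_of_card_ne_zero (card_dual ▸ Nat.card_pos.ne')
  rw [← card_dual]
  exact Nat.card_le_card_of_injective ι.comp fun f g => (MonoidHom.cancel_left hι).1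

theorem monoidHom_eq_one_of_isPerfect {A : Type*} [CommGroup A] [Group.IsPerfect G] (f : G →* A) :
    f = 1 :=
  MonoidHom.ker_eq_top_iff.1 <| top_le_iff.1 <|
    Group.IsPerfect.commutator_eq_top (G := G) ▸ Abelianization.commutator_subset_ker f

/-- The homomorphism `x ↦ f x * (g x)⁻¹` measuring how far apart `f` and `g` are, for `f` and `g`
that agree modulo a subgroup `A` centralized by the image of `g`. -/
def mulInvHom (f g : G →* H) (A : Subgroup H) (hA : ∀ x, f x * (g x)⁻¹ ∈ A)
    (hg : ∀ x, ∀ a ∈ A, Commute (g x) a) : G →* A :=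
  MonoidHom.mk' (fun x => ⟨f x * (g x)⁻¹, hA x⟩) fun x y => Subtype.ext <|
    calc f (x * y) * (g (x * y))⁻¹ = f x * ((f y * (g y)⁻¹) * (g x)⁻¹) := by
          simp only [map_mul, mul_inv_rev, mul_assoc]
      _ = f x * (g x)⁻¹ * (f y * (g y)⁻¹) := by
          rw [← (hg x _ (hA y)).inv_left.eq, mul_assoc]

end MonoidHom

section ClassTwo

open scoped commutatorElement IsMulCommutative

variable {G : Type*} [Group G]

/-- The commutator pairing `g ↦ (x ↦ ⁅g, x⁆)` of a group of nilpotency class at most two. -/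
def commutatorHom (hG : commutator G ≤ Subgroup.center G) : G →* G →* Subgroup.center G :=
  have comm_mem (g x : G) : ⁅g, x⁆ ∈ Subgroup.center G :=
    hG (Subgroup.commutator_mem_commutator (Subgroup.mem_top g) (Subgroup.mem_top x))
  MonoidHom.mk'
    (fun g => mulInvHom (MulAut.conj g).toMonoidHom (MonoidHom.id G) (Subgroup.center G)
      (comm_mem g) fun x _ ha => Subgroup.mem_center_iff.1 ha x)
    fun g h => MonoidHom.ext fun x => Subtype.ext <|
      calc ⁅g * h, x⁆ = g * ⁅h, x⁆ * g⁻¹ * ⁅g, x⁆ := commutatorElement_mul_left_eq_conj_mul g h x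
        _ = ⁅h, x⁆ * ⁅g, x⁆ := by
          rw [Subgroup.mem_center_iff.1 (comm_mem h x) g, mul_inv_cancel_right]
        _ = ⁅g, x⁆ * ⁅h, x⁆ := Subgroup.mem_center_iff.1 (comm_mem g x) _

@[simp]
theorem coe_commutatorHom_apply (hG : commutator G ≤ Subgroup.center G) (g x : G) :
    (commutatorHom hG g x : G) = ⁅g, x⁆ :=
  rfl

theorem ker_commutatorHom (hG : commutator G ≤ Subgroup.center G) :
    (commutatorHom hG).ker = Subgroup.center G := by
  ext g
  simp only [MonoidHom.mem_ker, MonoidHom.ext_iff, Subtype.ext_iff, coe_commutatorHom_apply,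
    MonoidHom.one_apply, OneMemClass.coe_one, commutatorElement_eq_one_iff_mul_comm,
    Subgroup.mem_center_iff, eq_comm]

variable [Finite G] [IsCyclic (Subgroup.center G)]

theorem commutatorHom_surjective (hG : commutator G = Subgroup.center G) :
    Function.Surjective (commutatorHom hG.le) := by
  have : Finite (G →* Subgroup.center G) := Finite.of_injective _ DFunLike.coe_injective
  refine MonoidHom.range_eq_top.1 (Subgroup.eq_top_of_le_card _ ?_)
  calc Nat.card (G →* Subgroup.center G)
      = Nat.card (Abelianization G →* Subgroup.center G) := Nat.card_congr Abelianization.lift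
    _ ≤ Nat.card (G ⧸ commutator G) := card_monoidHom_le_of_isCyclic (Abelianization G) _
    _ = Nat.card (G ⧸ (commutatorHom hG.le).ker) := by rw [ker_commutatorHom, hG]
    _ = Nat.card (commutatorHom hG.le).range :=
      Nat.card_congr (QuotientGroup.quotientKerEquivRange _).toEquiv

theorem exists_eq_conj_of_mul_inv_mem_center (hG : commutator G = Subgroup.center G) (f : G →* G)
    (hf : ∀ x, f x * x⁻¹ ∈ Subgroup.center G) : ∃ g, ∀ x, f x = MulAut.conj g x := by
  obtain ⟨g, hg⟩ := commutatorHom_surjective hG <|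
    mulInvHom f (MonoidHom.id G) (Subgroup.center G) hf fun x _ ha => Subgroup.mem_center_iff.1 ha x
  refine ⟨g, fun x => ?_⟩
  have displacement_eq : ⁅g, x⁆ = f x * x⁻¹ := congrArg Subtype.val (DFunLike.congr_fun hg x)
  rw [conj_eq_commutatorElement_mul, displacement_eq, inv_mul_cancel_right]

end ClassTwo

section Cocycle

open groupCohomology

theorem isMulCoboundary₁_of_coprime_index {G M : Type*} [Group G] [CommGroup M]
    [MulDistribMulAction G M] {K : Subgroup G} [K.FiniteIndex]
    (hK : (Nat.card M).Coprime K.index) {f : G → M} (hf : IsMulCocycle₁ f)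
    (hfK : ∀ k ∈ K, f k = 1) : IsMulCoboundary₁ f := by
  let _ : Fintype (G ⧸ K) := Fintype.ofFinite _
  have eq_of_coset_eq {x y : G} (h : (x : G ⧸ K) = y) : f x = f y := by
    rw [← mul_inv_cancel_left x y, hf, hfK _ (QuotientGroup.eq.1 h), smul_one, one_mul]
  have out_smul (x : G) (c : G ⧸ K) : f (x • c).out = x • f c.out * f x := by
    rw [← hf]
    refine eq_of_coset_eq ?_
    rw [QuotientGroup.out_eq', ← smul_eq_mul, ← MulAction.Quotient.smul_coe, QuotientGroup.out_eq']
  let b : M := ∏ c : G ⧸ K, f c.out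
  have b_eq (x : G) : b = x • b * f x ^ K.index :=
    calc b = ∏ c : G ⧸ K, f (x • c).out := (Equiv.prod_comp (MulAction.toPerm x) _).symm
      _ = x • b * f x ^ K.index := by
        simp only [out_smul, Finset.prod_mul_distrib, Finset.smul_prod', Finset.prod_const,
          Finset.card_univ, Subgroup.index_eq_card, Nat.card_eq_fintype_card, b]
  obtain ⟨a, ha : a ^ K.index = b⟩ := (powCoprime hK).surjective b
  refine ⟨a⁻¹, fun x => ?_⟩
  have a_eq : a = x • a * f x := (powCoprime hK).injective <|
    calc a ^ K.index = x • a ^ K.index * f x ^ K.index := by rw [ha, ← b_eq]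
      _ = (x • a * f x) ^ K.index := by rw [smul_pow', mul_pow]
  rw [smul_inv', inv_div_inv, div_eq_iff_eq_mul', ← a_eq]

end Cocycle

section Aut

open scoped IsMulCommutative

variable {X : Type*} [Group X]

theorem exists_eq_conj_of_coprime_index {A K : Subgroup X} [A.Normal] [IsMulCommutative A]
    [K.FiniteIndex] (hK : (Nat.card A).Coprime K.index) {α : MulAut X}
    (hα : ∀ x, α x * x⁻¹ ∈ A) (hαK : ∀ k ∈ K, α k = k) : ∃ a ∈ A, α = MulAut.conj a := by
  let _ : MulDistribMulAction X A :=
    MulDistribMulAction.compHom A (MulAut.conjNormal : X →* MulAut A)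
  have coe_smul (x : X) (a : A) : ((x • a : A) : X) = x * a * x⁻¹ := rfl
  let f : X → A := fun x => ⟨α x * x⁻¹, hα x⟩
  have hf : groupCohomology.IsMulCocycle₁ f := fun x y => by
    rw [mul_comm]
    ext
    simp only [f, Subgroup.coe_mul, coe_smul, map_mul]
    group
  obtain ⟨a, ha⟩ := isMulCoboundary₁_of_coprime_index hK hf fun k hk =>
    Subtype.ext (by simp only [f, hαK k hk, mul_inv_cancel, OneMemClass.coe_one])
  refine ⟨a⁻¹, A.inv_mem a.2, MulEquiv.ext fun x => mul_right_cancel (b := x⁻¹) ?_⟩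
  calc α x * x⁻¹ = ((a⁻¹ * x • a : A) : X) := by
        rw [mul_comm a⁻¹, ← div_eq_mul_inv (x • a), ha]
    _ = MulAut.conj (a⁻¹ : X) x * x⁻¹ := by
        rw [Subgroup.coe_mul, coe_smul, MulAut.conj_apply, Subgroup.coe_inv]
        group

theorem le_centralizer_of_isPerfect (A Y : Subgroup X) [A.Normal] [IsCyclic A]
    [Group.IsPerfect Y] : Y ≤ Subgroup.centralizer A := by
  let φ : Y →* (ZMod (Nat.card A))ˣ :=
    (IsCyclic.mulAutMulEquiv A).toMonoidHom.comp (MulAut.conjNormal.comp Y.subtype)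
  intro y hy
  have φ_eq_one : φ ⟨y, hy⟩ = 1 := by rw [monoidHom_eq_one_of_isPerfect φ, MonoidHom.one_apply]
  have conj_eq_one : MulAut.conjNormal y = (1 : MulAut A) :=
    (IsCyclic.mulAutMulEquiv A).map_eq_one_iff.1 φ_eq_one
  refine Subgroup.mem_centralizer_iff.2 fun a ha => ?_
  have conj_eq : y * a * y⁻¹ = a :=
    congrArg Subtype.val (DFunLike.congr_fun conj_eq_one (⟨a, ha⟩ : A))
  exact (mul_inv_eq_iff_eq_mul.1 conj_eq).symm

theorem apply_eq_self_of_isPerfect {A Y : Subgroup X} [IsMulCommutative A] [Group.IsPerfect Y]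
    (hY : Y ≤ Subgroup.centralizer A) {α : MulAut X} (hα : ∀ y ∈ Y, α y * y⁻¹ ∈ A)
    {y : X} (hy : y ∈ Y) : α y = y := by
  let δ := mulInvHom (α.toMonoidHom.comp Y.subtype) Y.subtype A (fun y => hα y y.2)
    fun y a ha => (Subgroup.mem_centralizer_iff.1 (hY y.2) a ha).symm
  have δ_eq_one : δ ⟨y, hy⟩ = 1 := by rw [monoidHom_eq_one_of_isPerfect δ, MonoidHom.one_apply]
  exact mul_inv_eq_one.1 (congrArg Subtype.val δ_eq_one)

theorem mul_inv_mem_centralizer {Q : Subgroup X} [hQ : Q.Normal] {α : MulAut X}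
    (hα : ∀ q ∈ Q, α q = q) (x : X) : α x * x⁻¹ ∈ Subgroup.centralizer (Q : Set X) := by
  refine Subgroup.mem_centralizer_iff.2 fun q hq => ?_
  have apply_conj : (α x)⁻¹ * q * α x = x⁻¹ * q * x := by
    simpa [hα q hq] using hα _ (hQ.conj_mem q hq x⁻¹)
  calc q * (α x * x⁻¹) = α x * ((α x)⁻¹ * q * α x) * x⁻¹ := by group
    _ = α x * x⁻¹ * q := by rw [apply_conj]; group

theorem exists_eq_conj_of_apply_eq_self {Q Y : Subgroup X} [Q.Normal]
    [IsCyclic (Subgroup.centralizer (Q : Set X))] [Group.IsPerfect Y] [(Q ⊔ Y).FiniteIndex]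
    (hcop : (Nat.card (Subgroup.centralizer (Q : Set X))).Coprime (Q ⊔ Y).index)
    {α : MulAut X} (hα : ∀ q ∈ Q, α q = q) :
    ∃ z ∈ Subgroup.centralizer (Q : Set X), α = MulAut.conj z := by
  have hαC := mul_inv_mem_centralizer hα
  have sup_le_fixed : Q ⊔ Y ≤ α.toMonoidHom.eqLocus (MonoidHom.id X) :=
    sup_le hα fun _ => apply_eq_self_of_isPerfect (le_centralizer_of_isPerfect _ Y) fun y _ => hαC y
  exact exists_eq_conj_of_coprime_index hcop hαC sup_le_fixed

theorem center_eq_subgroupOf_centralizer (Q : Subgroup X) :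
    Subgroup.center Q = (Subgroup.centralizer (Q : Set X)).subgroupOf Q := by
  ext q
  simp [Subgroup.mem_center_iff, Subgroup.mem_subgroupOf, Subgroup.mem_centralizer_iff,
    Subtype.ext_iff]

theorem exists_apply_eq_conj_of_mul_inv_mem {Q : Subgroup X} [Finite Q]
    [IsCyclic (Subgroup.center Q)] (hQ : commutator Q = Subgroup.center Q) {α : MulAut X}
    (hα : ∀ q ∈ Q, α q * q⁻¹ ∈ Q ⊓ Subgroup.centralizer (Q : Set X)) :
    ∃ g ∈ Q, ∀ q ∈ Q, α q = MulAut.conj g q := by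
  let f : Q →* Q := (α.toMonoidHom.comp Q.subtype).codRestrict Q fun q =>
    (Q.mul_mem_cancel_right (Q.inv_mem q.2)).1 (hα q q.2).1
  obtain ⟨g, hg⟩ := exists_eq_conj_of_mul_inv_mem_center hQ f fun q => by
    rw [center_eq_subgroupOf_centralizer]
    exact (hα q q.2).2
  exact ⟨g, g.2, fun q hq => congrArg Subtype.val (hg ⟨q, hq⟩)⟩

end Aut

theorem aut_centralizing_extraspecial_fitting_general {X : Type*} [Group X] [Finite X]
    (Q : Subgroup X) [Q.Normal] [IsCyclic (Subgroup.center Q)]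
    (hQ : commutator Q = Subgroup.center Q) (hC : Subgroup.centralizer (Q : Set X) ≤ Q)
    (Y : Subgroup X) [Group.IsPerfect Y]
    (hindex : (Nat.card (Subgroup.center Q)).Coprime (Q ⊔ Y).index) :
    (∀ α : MulAut X,
      (∀ q ∈ Q, α q * q⁻¹ ∈ Q ⊓ Subgroup.centralizer (Q : Set X)) →
      ∃ q₀ ∈ Q, α = MulAut.conj q₀) ∧
    (∀ α : MulAut X, (∀ q ∈ Q, α q = q) →
      ∃ z ∈ Q ⊓ Subgroup.centralizer (Q : Set X), α = MulAut.conj z) := by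
  let e : Subgroup.center Q ≃* Subgroup.centralizer (Q : Set X) :=
    (MulEquiv.subgroupCongr (center_eq_subgroupOf_centralizer Q)).trans
      (Subgroup.subgroupOfEquivOfLe hC)
  have : IsCyclic (Subgroup.centralizer (Q : Set X)) := isCyclic_of_surjective e e.surjective
  rw [Nat.card_congr e.toEquiv] at hindex
  rw [inf_eq_right.2 hC]
  refine ⟨fun α hα => ?_, fun α hα => exists_eq_conj_of_apply_eq_self hindex hα⟩
  obtain ⟨g, hg, hαg⟩ := exists_apply_eq_conj_of_mul_inv_mem hQ (inf_eq_right.2 hC ▸ hα)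
  obtain ⟨z, hz, hαz⟩ := exists_eq_conj_of_apply_eq_self (α := (MulAut.conj g)⁻¹ * α) hindex
    fun q hq => by rw [MulAut.mul_apply, hαg q hq, MulAut.inv_apply_self]
  exact ⟨g * z, Q.mul_mem hg (hC hz), by rw [map_mul, ← hαz, mul_inv_cancel_left]⟩

/-- Lemma 2.1(d): Let `X` be a finite group, `p` a prime, and `Q` a normal extraspecial
`p`-subgroup of `X` with `C_X(Q) = Z(Q)` (expressed as `C_X(Q) ≤ Q`). Suppose there is a
perfect normal subgroup `Y` of `X` with `p ∤ |X : QY|` (i.e. `X/(Q·X^(∞))` is a `p'`-group).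
Then every automorphism of `X` acting trivially on `Q/Z(Q)` is conjugation by an element
of `Q`, and every automorphism of `X` fixing `Q` pointwise is conjugation by an element of
`Z(Q)`. -/
theorem aut_centralizing_extraspecial_fitting {X : Type*} [Group X] [Finite X]
    {p : ℕ} (hp : p.Prime) (Q : Subgroup X) (hQ : Q.Normal)
    (hextra : IsExtraspecial p Q)
    (hC : Subgroup.centralizer (Q : Set X) ≤ Q)
    (Y : Subgroup X) (hY : Y.Normal) (hYperf : ⁅Y, Y⁆ = Y)
    (hindex : ¬ p ∣ (Q ⊔ Y).index) :
    (∀ α : MulAut X,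
      (∀ q ∈ Q, α q * q⁻¹ ∈ Q ⊓ Subgroup.centralizer (Q : Set X)) →
      ∃ q₀ ∈ Q, α = MulAut.conj q₀) ∧
    (∀ α : MulAut X, (∀ q ∈ Q, α q = q) →
      ∃ z ∈ Q ⊓ Subgroup.centralizer (Q : Set X), α = MulAut.conj z) := by
  obtain ⟨-, hZ, -, rfl⟩ := hextra
  have : Fact (Nat.card (Subgroup.center Q)).Prime := ⟨hp⟩
  have : IsCyclic (Subgroup.center Q) := isCyclic_of_prime_card rfl
  have : Group.IsPerfect Y := Subgroup.isPerfect_iff.2 hYperf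
  exact aut_centralizing_extraspecial_fitting_general Q hZ.symm hC Y
    (hp.coprime_iff_not_dvd.2 hindex)
end

section
/- Let T be a finite 2-group with |Z(T)| = 2, and let U be a normal subgroup of T that is a Klein four-group. Then U is not contained in Z(T), the centralizer T₀ = C_T(U) has index 2 in T, and the set of elements w of Z(T₀) with w² = 1 is exactly U (that is, Ω₁(Z(C_T(U))) = U). -/
/-!
A normal Klein four-group `U` of a `2`-group with centre `Z` of order `2` contains `Z`, so
`C_T(U) = C_T(u)` for every `u ∈ U \ Z`. The index of `C_T(u)` is a power of `2`, and it is the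
size of a nontrivial conjugacy class inside `U \ {1}`, so it is `2`. For `a ∉ C_T(U)` the map
`w ↦ ⁅a, w⁆` takes `Ω₁(Z(C_T(U)))` into `Z`, and each of its fibres lies in a coset of `Z`. As its
restriction to `U` already attains both values, `Ω₁(Z(C_T(U)))` is no larger than `U`.
-/

open Subgroup
open scoped commutatorElement

section General

variable {G : Type*} [Group G]

theorem covBy_of_prime_relIndex {H K : Subgroup G} (hHK : H ≤ K) (hp : (H.relIndex K).Prime) :
    H ⋖ K := by
  refine ⟨lt_of_le_not_ge hHK fun hKH ↦ hp.ne_one (relIndex_eq_one.mpr hKH), fun L hHL hLK ↦ ?_⟩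
  rw [← relIndex_mul_relIndex H L K hHL.le hLK.le, Nat.prime_mul_iff] at hp
  rcases hp with ⟨-, hindex⟩ | ⟨-, hindex⟩
  · exact hLK.not_ge (relIndex_eq_one.mp hindex)
  · exact hHL.not_ge (relIndex_eq_one.mp hindex)

theorem le_of_covBy_of_mem {H K L : Subgroup G} (hHK : H ⋖ K) (hHL : H ≤ L) {a : G}
    (haK : a ∈ K) (haH : a ∉ H) (haL : a ∈ L) : K ≤ L := by
  rcases hHK.eq_or_eq (le_inf hHK.le hHL) inf_le_left with h | h
  · exact absurd (h ▸ mem_inf.mpr ⟨haK, haL⟩) haH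
  · exact inf_eq_left.mp h

theorem eq_one_or_eq_of_card_eq_two {H : Subgroup G} (hH : Nat.card H = 2) {x z : G}
    (hx : x ∈ H) (hz : z ∈ H) (hz1 : z ≠ 1) : x = 1 ∨ x = z := by
  obtain ⟨y, -, hy⟩ := (Nat.card_eq_two_iff' (1 : H)).mp hH
  refine or_iff_not_imp_left.mpr fun hx1 ↦ ?_
  have hxz : (⟨x, hx⟩ : H) = ⟨z, hz⟩ :=
    (hy _ (Subtype.coe_ne_coe.mp hx1)).trans (hy _ (Subtype.coe_ne_coe.mp hz1)).symm
  exact congrArg Subtype.val hxz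

theorem centralizer_eq_centralizer_singleton_of_center_covBy {U : Subgroup G}
    (hU : center G ⋖ U) {u : G} (huU : u ∈ U) (huZ : u ∉ center G) :
    centralizer (U : Set G) = centralizer {u} := by
  refine le_antisymm (centralizer_le (Set.singleton_subset_iff.mpr huU)) ?_
  exact le_centralizer_iff.mp <| le_of_covBy_of_mem hU (center_le_centralizer _) huU huZ <|
    closure_le_centralizer_centralizer {u} (mem_closure_singleton_self u)

theorem index_centralizer_singleton (g : G) :
    (centralizer {g}).index = (MulAction.orbit (ConjAct G) g).ncard :=
  calc (centralizer {g}).index = (MulAction.stabilizer (ConjAct G) g).index :=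
        (congrArg index (centralizer_eq_comap_stabilizer g)).trans
          (index_comap_of_surjective _ ConjAct.toConjAct.surjective)
    _ = (MulAction.orbit (ConjAct G) g).ncard := MulAction.index_stabilizer _ g

theorem commute_inv_mul_of_commutatorElement_eq {a u w : G} (h : ⁅a, w⁆ = ⁅a, u⁆) :
    Commute a (u⁻¹ * w) := by
  have hconj : a * (u⁻¹ * w) * a⁻¹ = u⁻¹ * w :=
    calc a * (u⁻¹ * w) * a⁻¹ = u⁻¹ * ⁅a, u⁆⁻¹ * (⁅a, w⁆ * w) := by
          simp only [commutatorElement_def]; group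
      _ = u⁻¹ * w := by rw [h]; group
  exact mul_inv_eq_iff_eq_mul.mp hconj

end General

section PGroup

variable {p : ℕ} [Fact p.Prime] {T : Type*} [Group T] {U : Subgroup T}

theorem inf_center_ne_bot_of_isPGroup (hT : IsPGroup p T) [U.Normal] [Finite U] (hU : U ≠ ⊥) :
    U ⊓ center T ≠ ⊥ := by
  have hdvd : p ∣ Nat.card U :=
    (hT.to_subgroup U).card_eq_or_dvd.resolve_left (hU ∘ U.card_eq_one.mp)
  obtain ⟨z, hz, hz1⟩ := (hT.of_equiv ConjAct.toConjAct)
    |>.exists_fixed_point_of_prime_dvd_card_of_fixed_point U hdvd (a := 1) fun g ↦ smul_one g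
  have hzZ : (z : T) ∈ center T := by
    rw [← SetLike.mem_coe, ← ConjAct.fixedPoints_eq_center]
    exact fun g ↦ congrArg Subtype.val (hz g)
  exact fun hbot ↦ hz1 (Subtype.ext (mem_bot.mp (hbot ▸ mem_inf.mpr ⟨z.2, hzZ⟩)).symm)

theorem center_le_of_normal_of_isPGroup (hT : IsPGroup p T) (hZ : Nat.card (center T) = p)
    [U.Normal] [Finite U] (hU : U ≠ ⊥) : center T ≤ U := by
  have : Fact (Nat.card (center T)).Prime := ⟨hZ ▸ Fact.out⟩
  rcases (U.subgroupOf (center T)).eq_bot_or_eq_top_of_prime_card with h | h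
  · exact absurd (disjoint_iff.mp (subgroupOf_eq_bot.mp h)) (inf_center_ne_bot_of_isPGroup hT hU)
  · exact subgroupOf_eq_top.mp h

theorem center_covBy_of_card_eq_prime_sq (hT : IsPGroup p T) (hZ : Nat.card (center T) = p)
    [U.Normal] (hU : Nat.card U = p ^ 2) : center T ⋖ U := by
  have hp : p.Prime := Fact.out
  have : Finite U := Nat.finite_of_card_ne_zero (hU ▸ pow_ne_zero 2 hp.ne_zero)
  have hbot : U ≠ ⊥ := fun h ↦ (Nat.one_lt_pow two_ne_zero hp.one_lt).ne' (hU ▸ card_eq_one.mpr h)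
  have hle : center T ≤ U := center_le_of_normal_of_isPGroup hT hZ hbot
  have hindex : p * (center T).relIndex U = p * p := by
    rw [← sq, ← hU, ← hZ, ← relIndex_bot_left, ← relIndex_bot_left,
      relIndex_mul_relIndex ⊥ _ U bot_le hle]
  exact covBy_of_prime_relIndex hle (Nat.eq_of_mul_eq_mul_left hp.pos hindex ▸ hp)

theorem index_centralizer_of_card_eq_prime_sq (hT : IsPGroup p T)
    (hZ : Nat.card (center T) = p) [hUnormal : U.Normal] (hU : Nat.card U = p ^ 2) :
    (centralizer (U : Set T)).index = p := by
  have hp : p.Prime := Fact.out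
  have : Finite U := Nat.finite_of_card_ne_zero (hU ▸ pow_ne_zero 2 hp.ne_zero)
  have hZU : center T ⋖ U := center_covBy_of_card_eq_prime_sq hT hZ hU
  obtain ⟨u, huU, huZ⟩ := SetLike.exists_of_lt hZU.lt
  rw [centralizer_eq_centralizer_singleton_of_center_covBy hZU huU huZ]
  have horbit_sub : MulAction.orbit (ConjAct T) u ⊆ (U : Set T) \ {1} := by
    rintro _ ⟨g, rfl⟩
    refine ⟨hUnormal.conj_mem u huU (ConjAct.ofConjAct g), fun h ↦ huZ ?_⟩
    exact conj_eq_one_iff.mp h ▸ one_mem _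
  have hindex_lt : (centralizer {u}).index < p ^ 2 := by
    rw [index_centralizer_singleton, ← hU]
    exact Set.ncard_lt_ncard (horbit_sub.trans_ssubset
      (Set.sdiff_singleton_ssubset.mpr U.one_mem)) (Set.toFinite _)
  have hindex_ne_one : (centralizer {u}).index ≠ 1 := by
    rwa [Ne, index_eq_one, centralizer_eq_top_iff_subset, Set.singleton_subset_iff]
  have : Finite (MulAction.orbit (ConjAct T) u) :=
    ((Set.toFinite (U : Set T)).subset (horbit_sub.trans Set.sdiff_subset)).to_subtype
  obtain ⟨n, hn⟩ := (hT.of_equiv ConjAct.toConjAct).card_orbit u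
  replace hn : (centralizer {u}).index = p ^ n := (index_centralizer_singleton u).trans hn
  have hn_lt : n < 2 := (Nat.pow_lt_pow_iff_right hp.one_lt).mp (hn ▸ hindex_lt)
  have hn_ne : n ≠ 0 := fun h ↦ hindex_ne_one (by rw [hn, h, pow_zero])
  rw [hn, show n = 1 by omega, pow_one]

end PGroup

section IndexTwo

variable {T : Type*} [Group T] {C : Subgroup T} {a w : T}

theorem mem_center_of_commute_of_prime_index (hC : C.index.Prime) (ha : a ∉ C)
    (hwC : w ∈ centralizer (C : Set T)) (haw : Commute a w) : w ∈ center T := by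
  have hcovBy : C ⋖ ⊤ := covBy_of_prime_relIndex le_top (by rwa [relIndex_top_right])
  have hC_le : C ≤ centralizer {w} := fun c hc ↦
    mem_centralizer_singleton_iff.mpr (mem_centralizer_iff.mp hwC c hc)
  have htop : ⊤ ≤ centralizer {w} := le_of_covBy_of_mem hcovBy hC_le (mem_top a) ha
    (mem_centralizer_singleton_iff.mpr haw)
  exact mem_center_iff.mpr fun g ↦ mem_centralizer_singleton_iff.mp (htop (mem_top g))

theorem commutatorElement_mem_center_of_index_two (hC : C.index = 2) (ha : a ∉ C)
    (hw : w ∈ C ⊓ centralizer (C : Set T)) (hww : w * w = 1) : ⁅a, w⁆ ∈ center T := by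
  have : C.Normal := normal_of_index_eq_two hC
  have hwinv : w⁻¹ = w := inv_eq_of_mul_eq_one_left hww
  have hconj : a * w * a⁻¹ ∈ centralizer (C : Set T) := Normal.conj_mem inferInstance w hw.2 a
  have hcomm : w * (a * w * a⁻¹) = a * w * a⁻¹ * w := mem_centralizer_iff.mp hconj w hw.1
  have hsq : a * a * w = w * (a * a) :=
    mem_centralizer_iff.mp hw.2 _ (mul_self_mem_of_index_two hC a)
  rw [commutatorElement_def, hwinv]
  refine mem_center_of_commute_of_prime_index (hC ▸ Nat.prime_two) ha (mul_mem hconj hw.2) ?_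
  calc a * (a * w * a⁻¹ * w) = a * a * w * a⁻¹ * w := by group
    _ = w * (a * w * a⁻¹) * a := by rw [hsq]; group
    _ = a * w * a⁻¹ * w * a := by rw [hcomm]

theorem mem_of_mem_inf_centralizer_of_index_two (hZ : Nat.card (center T) = 2)
    (hC : C.index = 2) {U : Subgroup T} (hZU : center T < U)
    (hUC : U ≤ C ⊓ centralizer (C : Set T)) (hUelem : ∀ u ∈ U, u * u = 1)
    (hw : w ∈ C ⊓ centralizer (C : Set T)) (hww : w * w = 1) : w ∈ U := by
  have hCprime : C.index.Prime := hC ▸ Nat.prime_two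
  obtain ⟨a, -, ha⟩ := SetLike.exists_of_lt
    (lt_top_iff_ne_top.mpr (hCprime.ne_one ∘ index_eq_one.mpr))
  obtain ⟨u, huU, huZ⟩ := SetLike.exists_of_lt hZU
  have hau : ⁅a, u⁆ ≠ 1 := fun h ↦ huZ <|
    mem_center_of_commute_of_prime_index hCprime ha (hUC huU).2
      (commutatorElement_eq_one_iff_commute.mp h)
  obtain ⟨v, hvU, hav⟩ : ∃ v ∈ U, ⁅a, w⁆ = ⁅a, v⁆ := by
    rcases eq_one_or_eq_of_card_eq_two hZ
      (commutatorElement_mem_center_of_index_two hC ha hw hww)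
      (commutatorElement_mem_center_of_index_two hC ha (hUC huU) (hUelem u huU)) hau with h | h
    · exact ⟨1, one_mem U, h.trans (commutatorElement_one_right a).symm⟩
    · exact ⟨u, huU, h⟩
  have hcentral : v⁻¹ * w ∈ center T :=
    mem_center_of_commute_of_prime_index hCprime ha (mul_mem (inv_mem (hUC hvU).2) hw.2)
      (commute_inv_mul_of_commutatorElement_eq hav)
  exact (U.mul_mem_cancel_left (inv_mem hvU)).mp (hZU.le hcentral)

end IndexTwo

theorem klein_four_normal_in_twogroup_general {T : Type*} [Group T]
    (h2 : IsPGroup 2 T) (hZ : Nat.card (Subgroup.center T) = 2)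
    (U : Subgroup T) (hUnormal : U.Normal) (hUcard : Nat.card U = 4)
    (hUelem : ∀ u ∈ U, u * u = 1) :
    ¬ U ≤ Subgroup.center T ∧
    (Subgroup.centralizer (U : Set T)).index = 2 ∧
    (∀ w : T,
      (w ∈ Subgroup.centralizer (U : Set T) ⊓
          Subgroup.centralizer ((Subgroup.centralizer (U : Set T) : Subgroup T) : Set T) ∧
        w * w = 1) ↔ w ∈ U) := by
  have hZU : center T ⋖ U := center_covBy_of_card_eq_prime_sq h2 hZ hUcard
  have hindex : (centralizer (U : Set T)).index = 2 :=
    index_centralizer_of_card_eq_prime_sq h2 hZ hUcard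
  have : IsMulCommutative U := IsPGroup.isMulCommutative_of_card_eq_prime_sq (p := 2) hUcard
  have hUC : U ≤ centralizer (U : Set T) ⊓ centralizer (centralizer (U : Set T) : Set T) :=
    le_inf U.le_centralizer (le_centralizer_iff.mp le_rfl)
  refine ⟨hZU.lt.not_ge, hindex, fun w ↦ ⟨fun ⟨hw, hww⟩ ↦ ?_, fun hw ↦ ⟨hUC hw, hUelem w hw⟩⟩⟩
  exact mem_of_mem_inf_centralizer_of_index_two hZ hindex hZU.lt hUC hUelem hw hww

/-- Start of the proof of Lemma 2.3: Let `T` be a finite 2-group with `|Z(T)| = 2` and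
`U ⊴ T` a Klein four-group. Then `U ≰ Z(T)`, `T₀ = C_T(U)` has index 2 in `T`, and
`Ω₁(Z(C_T(U))) = U`. -/
theorem klein_four_normal_in_twogroup {T : Type*} [Group T] [Finite T]
    (h2 : IsPGroup 2 T) (hZ : Nat.card (Subgroup.center T) = 2)
    (U : Subgroup T) (hUnormal : U.Normal) (hUcard : Nat.card U = 4)
    (hUelem : ∀ u ∈ U, u * u = 1) :
    ¬ U ≤ Subgroup.center T ∧
    (Subgroup.centralizer (U : Set T)).index = 2 ∧
    (∀ w : T,
      (w ∈ Subgroup.centralizer (U : Set T) ⊓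
          Subgroup.centralizer ((Subgroup.centralizer (U : Set T) : Subgroup T) : Set T) ∧
        w * w = 1) ↔ w ∈ U) :=
  klein_four_normal_in_twogroup_general h2 hZ U hUnormal hUcard hUelem
end

section
/- Let the finite group G act on a finite set Ω and let α ∈ Ω, with stabilizer G_α. Assume: (a) the action of G on Ω is faithful and primitive; (b) there is a G_α-orbit Ψ on Ω \ {α} such that G_α acts faithfully and primitively on Ψ; (c) Ψ is the unique G_α-orbit on Ω \ {α} of cardinality |Ψ|; (d) either (d1) every G_α-orbit Ψ' on Ω \ {α} satisfies conditions (b) and (c) in place of Ψ (G_α faithful and primitive on Ψ', and Ψ' the unique orbit of its cardinality), or (d2) for every β ∈ Ψ, the only automorphism of G_α fixing the two-point stabilizer G_α ∩ G_β pointwise is the identity; and (e) G_α is not cyclic. Then the only automorphism of G fixing G_α pointwise is the identity, i.e., C_{Aut(G)}(G_α) = 1. -/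
/-- A subgroup `H` of `G` acts faithfully and primitively on an (invariant) subset `s`
of a `G`-set: only `1 ∈ H` fixes `s` pointwise, `H` is transitive on `s`, and every
block of `H` contained in `s` is trivial. -/
def IsFaithfulPrimitiveOn {G Ω : Type*} [Group G] [MulAction G Ω]
    (H : Subgroup G) (s : Set Ω) : Prop :=
  (∀ g ∈ H, (∀ x ∈ s, g • x = x) → g = 1) ∧
  (∀ x ∈ s, ∀ y ∈ s, ∃ g ∈ H, g • x = y) ∧
  (∀ B ⊆ s, (∀ g ∈ H, (g • ·) '' B = B ∨ Disjoint ((g • ·) '' B) B) →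
    B.Subsingleton ∨ B = s)

/-!
An injective endomorphism `φ` of `G` fixing `G_a` pointwise induces an injective `φ`-equivariant map
`σ` of `Ω ≅ G ⧸ G_a` that fixes `a` and commutes with `G_a`. If `σ` moved a point of a suborbit
satisfying (b) and (c), it would map that suborbit to itself. But in a faithful primitive group with
a nontrivial equivariant self-map, point stabilizers are normal, hence trivial; being maximal, they
force the group to be cyclic, against (e). In case (d1) this makes `σ`, hence `φ`, trivial.

In case (d2) we only get `σ b = b`. The suborbit paired with `Ψ` has the same length, so it is `Ψ`,
and some `k` exchanges `a` and `b`. Conjugation by `k` turns (d2) into `C_{Aut(G_b)}(G_{ab}) = 1`;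
as `φ` preserves `G_b` and fixes `G_{ab}` pointwise, it fixes `G_b` pointwise. Finally `G_a` and
`G_b` are distinct maximal subgroups, so they generate `G`.
-/

section

open MulAction Function
open scoped Pointwise

/-! ### Equivariant maps and point stabilizers -/

section EquivariantMap

variable {G K X Y : Type*} [Group G] [Group K] [MulAction G X] [MulAction K Y]

theorem map_mem_stabilizer {φ : G → K} (σ : X →ₑ[φ] Y) {g : G} {x : X} (hg : g ∈ stabilizer G x) :
    φ g ∈ stabilizer K (σ x) := by
  rw [mem_stabilizer_iff, ← map_smulₛₗ, mem_stabilizer_iff.1 hg]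

theorem exists_equivariant_of_stabilizer_le [IsPretransitive G X] (φ : G →* K) {x : X} {y : Y}
    (h : stabilizer G x ≤ (stabilizer K y).comap φ) : ∃ σ : X →ₑ[φ] Y, σ x = y := by
  choose t ht using exists_smul_eq G x
  have happly (g : G) : φ (t (g • x)) • y = φ g • y := by
    have hmem : (t (g • x))⁻¹ * g ∈ stabilizer G x := by
      rw [mem_stabilizer_iff, mul_smul, inv_smul_eq_iff, ht]
    have hfix : φ ((t (g • x))⁻¹ * g) • y = y := h hmem
    rwa [map_mul, map_inv, mul_smul, inv_smul_eq_iff, eq_comm] at hfix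
  refine ⟨⟨fun z ↦ φ (t z) • y, fun g z ↦ ?_⟩, by simpa using! happly 1⟩
  obtain ⟨k, rfl⟩ := exists_smul_eq G x z
  rw [← mul_smul, happly, happly, map_mul, mul_smul]

theorem injective_of_comap_stabilizer_le [IsPretransitive G X] {φ : G →* K} (σ : X →ₑ[φ] Y) {x : X}
    (h : (stabilizer K (σ x)).comap φ ≤ stabilizer G x) : Injective σ := by
  intro u v huv
  obtain ⟨k, rfl⟩ := exists_smul_eq G x u
  obtain ⟨l, rfl⟩ := exists_smul_eq G x v
  have hmem : l⁻¹ * k ∈ stabilizer G x := h <| by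
    rw [map_smulₛₗ, map_smulₛₗ] at huv
    rw [Subgroup.mem_comap, mem_stabilizer_iff, map_mul, map_inv, mul_smul, huv, inv_smul_smul]
  rwa [mem_stabilizer_iff, mul_smul, inv_smul_eq_iff] at hmem

theorem exists_injective_equivariant_of_eqOn_stabilizer [IsPretransitive G X] {φ : G →* G}
    (hφ : Injective φ) {x : X} (hx : ∀ g ∈ stabilizer G x, φ g = g) :
    ∃ σ : X →ₑ[φ] X, Injective σ ∧ σ x = x := by
  obtain ⟨σ, hσx⟩ := exists_equivariant_of_stabilizer_le φ (x := x) (y := x) fun g hg ↦ by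
    rwa [Subgroup.mem_comap, hx g hg]
  refine ⟨σ, injective_of_comap_stabilizer_le σ (x := x) fun g hg ↦ ?_, hσx⟩
  rw [hσx, Subgroup.mem_comap] at hg
  rwa [← hφ (hx _ hg)]

theorem ncard_orbit_apply_of_injective {M X Y : Type*} [Monoid M] [MulAction M X]
    [MulAction M Y] (σ : X →[M] Y) (hσ : Injective σ) (x : X) :
    (orbit M (σ x)).ncard = (orbit M x).ncard := by
  rw [← Set.ncard_image_of_injective _ hσ]
  congr 1
  simp only [orbit, ← Set.range_comp, comp_def, map_smul]

theorem eq_id_of_equivariant_eq_id [FaithfulSMul G X] {φ : G →* G} (σ : X →ₑ[φ] X)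
    (hσ : ∀ x, σ x = x) : φ = MonoidHom.id G :=
  MonoidHom.ext fun g ↦ eq_of_smul_eq_smul (α := X) fun x ↦ by
    simpa only [hσ, MonoidHom.id_apply] using (map_smulₛₗ σ g x).symm

theorem stabilizer_ne_of_faithfulSMul_orbit {x y : X} [Nontrivial (stabilizer G x)]
    [FaithfulSMul (stabilizer G x) (orbit (stabilizer G x) y)] :
    stabilizer G x ≠ stabilizer G y := by
  intro heq
  have hfix : y ∈ fixedPoints (stabilizer G x) X := fun g ↦
    (heq ▸ g.2 : (g : G) ∈ stabilizer G y)
  have : Subsingleton (orbit (stabilizer G x) y) :=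
    (subsingleton_orbit_iff_mem_fixedPoints.2 hfix).coe_sort
  obtain ⟨g, k, hgk⟩ := exists_pair_ne (stabilizer G x)
  exact hgk (eq_of_smul_eq_smul (α := orbit (stabilizer G x) y) fun _ ↦ Subsingleton.elim _ _)

theorem eq_of_eqOn_stabilizers [IsPreprimitive G X] {M : Type*} [Monoid M] {φ ψ : G →* M} {x y : X}
    (hxy : stabilizer G x ≠ stabilizer G y) (hx : Set.EqOn φ ψ (stabilizer G x))
    (hy : Set.EqOn φ ψ (stabilizer G y)) : φ = ψ := by
  have : Nontrivial X := ⟨x, y, fun h ↦ hxy (h ▸ rfl)⟩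
  have hsup : stabilizer G x ⊔ stabilizer G y = ⊤ :=
    (IsPreprimitive.isCoatom_stabilizer_of_isPreprimitive G x).sup_eq_top_of_ne
      (IsPreprimitive.isCoatom_stabilizer_of_isPreprimitive G y) hxy
  have hle : stabilizer G x ⊔ stabilizer G y ≤ φ.eqLocus ψ := sup_le hx hy
  exact MonoidHom.ext fun g ↦ hle (hsup ▸ Subgroup.mem_top g)

end EquivariantMap

/-! ### Primitive groups with an equivariant self-map -/

section EquivariantSelfMap

variable {H X : Type*} [Group H] [MulAction H X]

theorem isCyclic_of_isCoatom_bot (h : IsCoatom (⊥ : Subgroup H)) : IsCyclic H := by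
  obtain ⟨g, -, hg⟩ := SetLike.exists_of_lt h.lt_top
  exact isCyclic_iff_exists_zpowers_eq_top.2
    ⟨_, h.2 _ (bot_lt_iff_ne_bot.2 (mt Subgroup.zpowers_eq_bot.1 hg))⟩

theorem stabilizer_eq_bot_of_normal [FaithfulSMul H X] [IsPretransitive H X] (x : X)
    [hN : (stabilizer H x).Normal] : stabilizer H x = ⊥ := by
  refine (Subgroup.eq_bot_iff_forall _).2 fun h hh ↦ eq_of_smul_eq_smul (α := X) fun y ↦ ?_
  obtain ⟨g, rfl⟩ := exists_smul_eq H x y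
  have hconj : g⁻¹ * h * g ∈ stabilizer H x := by simpa using hN.conj_mem h hh g⁻¹
  rw [mem_stabilizer_iff, mul_smul, mul_smul, inv_smul_eq_iff] at hconj
  rw [hconj, one_smul]

theorem normal_stabilizer_of_equivariant_ne [IsPreprimitive H X] (σ : X →[H] X) {x : X}
    (hne : σ x ≠ x) : (stabilizer H x).Normal := by
  have : Nontrivial X := ⟨_, _, hne⟩
  have hmax (y : X) : IsCoatom (stabilizer H y) :=
    IsPreprimitive.isCoatom_stabilizer_of_isPreprimitive H y
  obtain ⟨g, hg⟩ := exists_smul_eq H x (σ x)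
  have hle : stabilizer H x ≤ stabilizer H (σ x) := fun _ ↦ map_mem_stabilizer σ
  have heq : stabilizer H (g • x) = stabilizer H x := by
    rw [hg]
    exact ((hmax x).le_iff_eq (hmax _).1).1 hle
  have hg_norm : g ∈ Subgroup.normalizer (stabilizer H x : Set H) := by
    refine Subgroup.mem_normalizer_iff.2 fun h ↦ ?_
    nth_rw 2 [← heq]
    simp [mem_stabilizer_iff, mul_smul]
  have hg_notMem : g ∉ stabilizer H x := fun h ↦ hne (hg.symm.trans h)
  exact Subgroup.normalizer_eq_top_iff.1 <|
    (hmax x).2 _ (SetLike.lt_iff_le_and_exists.2 ⟨Subgroup.le_normalizer, g, hg_norm, hg_notMem⟩)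

theorem isCyclic_of_equivariant_ne [FaithfulSMul H X] [IsPreprimitive H X] (σ : X →[H] X) {x : X}
    (hne : σ x ≠ x) : IsCyclic H := by
  have : Nontrivial X := ⟨_, _, hne⟩
  have := normal_stabilizer_of_equivariant_ne σ hne
  apply isCyclic_of_isCoatom_bot
  rw [← stabilizer_eq_bot_of_normal x]
  exact IsPreprimitive.isCoatom_stabilizer_of_isPreprimitive H x

theorem isCyclic_of_equivariant_ne_of_mem_orbit (σ : X →[H] X) {x : X}
    [FaithfulSMul H (orbit H x)] [IsPreprimitive H (orbit H x)]
    (hmem : σ x ∈ orbit H x) (hne : σ x ≠ x) : IsCyclic H := by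
  have hmaps : ∀ y ∈ orbit H x, σ y ∈ orbit H x := by
    rintro _ ⟨h, rfl⟩
    simpa only [map_smul] using mem_orbit_of_mem_orbit h hmem
  let τ : orbit H x →[H] orbit H x :=
    { toFun := fun y ↦ ⟨σ y, hmaps y y.2⟩
      map_smul' := fun h y ↦ Subtype.ext (map_smul σ h (y : X)) }
  exact isCyclic_of_equivariant_ne τ (x := ⟨x, mem_orbit_self x⟩) fun h ↦
    hne (congrArg Subtype.val h)

end EquivariantSelfMap

/-! ### Automorphisms -/

section Automorphisms

variable {G K : Type*} [Group G] [Group K]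

theorem exists_mulAut_restrict {φ : G →* G} (hφ : Injective φ) (H : Subgroup G) [Finite H]
    (hH : ∀ x ∈ H, φ x ∈ H) : ∃ ψ : MulAut H, ∀ x, (ψ x : G) = φ x := by
  let ψ : H →* H := (φ.domRestrict H).codRestrict H fun x ↦ hH x x.2
  have hψ : Injective ψ := fun x y hxy ↦ Subtype.ext (hφ (congrArg Subtype.val hxy))
  exact ⟨MulEquiv.ofBijective ψ (Finite.injective_iff_bijective.1 hψ), fun _ ↦ rfl⟩

theorem mulAut_eq_one_of_mulEquiv (e : G ≃* K) {S : Set G}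
    (hS : ∀ ψ : MulAut G, (∀ x ∈ S, ψ x = x) → ψ = 1) {ψ : MulAut K}
    (hψ : ∀ x ∈ S, ψ (e x) = e x) : ψ = 1 := by
  have hconj : (e.trans ψ).trans e.symm = (1 : MulAut G) :=
    hS _ fun x hx ↦ by simp [hψ x hx]
  ext y
  simpa [e.symm_apply_eq] using DFunLike.congr_fun hconj (e.symm y)

end Automorphisms

/-! ### Paired suborbits -/

section PairedSuborbits

variable {G Ω : Type*} [Group G] [MulAction G Ω]

theorem relIndex_comm_of_card_eq {A B : Subgroup G} [Finite A] (h : Nat.card A = Nat.card B) :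
    A.relIndex B = B.relIndex A := by
  have hA := Subgroup.relIndex_mul_relIndex ⊥ (A ⊓ B) A bot_le inf_le_left
  have hB := Subgroup.relIndex_mul_relIndex ⊥ (A ⊓ B) B bot_le inf_le_right
  rw [Subgroup.inf_relIndex_left, Subgroup.relIndex_bot_left, Subgroup.relIndex_bot_left] at hA
  rw [Subgroup.inf_relIndex_right, Subgroup.relIndex_bot_left, Subgroup.relIndex_bot_left, ← h,
    ← hA] at hB
  have : Finite ↥(A ⊓ B) := Finite.Set.subset (A : Set G) inf_le_left
  exact Nat.eq_of_mul_eq_mul_left Nat.card_pos hB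

theorem ncard_orbit_stabilizer (a c : Ω) :
    (orbit (stabilizer G a) c).ncard = (stabilizer G c).relIndex (stabilizer G a) :=
  (index_stabilizer (stabilizer G a) c).symm

theorem ncard_orbit_stabilizer_inv_smul (a : Ω) [Finite (stabilizer G a)] (g : G) :
    (orbit (stabilizer G a) (g⁻¹ • a)).ncard = (orbit (stabilizer G a) (g • a)).ncard := by
  have hinj : Injective (MulAut.conj g).toMonoidHom := (MulAut.conj g).injective
  have hcard : Nat.card (stabilizer G a) = Nat.card (stabilizer G (g • a)) :=
    Nat.card_congr (stabilizerEquivStabilizer rfl).toEquiv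
  calc (orbit (stabilizer G a) (g⁻¹ • a)).ncard
      = (stabilizer G (g⁻¹ • a)).relIndex (stabilizer G a) := ncard_orbit_stabilizer _ _
    _ = (stabilizer G a).relIndex (stabilizer G (g • a)) := by
      rw [← Subgroup.relIndex_map_map_of_injective _ _ hinj,
        ← stabilizer_smul_eq_stabilizer_map_conj, ← stabilizer_smul_eq_stabilizer_map_conj,
        smul_inv_smul]
    _ = (stabilizer G (g • a)).relIndex (stabilizer G a) := relIndex_comm_of_card_eq hcard
    _ = (orbit (stabilizer G a) (g • a)).ncard := (ncard_orbit_stabilizer _ _).symm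

theorem exists_swap_of_inv_smul_mem_orbit {a : Ω} {g : G}
    (h : g⁻¹ • a ∈ orbit (stabilizer G a) (g • a)) : ∃ k : G, k • a = g • a ∧ k • g • a = a := by
  obtain ⟨⟨s, hs⟩, hsg : s • g • a = g⁻¹ • a⟩ := h
  refine ⟨g * s, ?_, ?_⟩
  · rw [mul_smul, mem_stabilizer_iff.1 hs]
  · rw [mul_smul, hsg, smul_inv_smul]

theorem eqOn_stabilizer_of_swap {a b : Ω} [Finite (stabilizer G a)] {φ : G →* G}
    (hφ : Injective φ) (hφa : ∀ g ∈ stabilizer G a, φ g = g)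
    (hφb : ∀ g ∈ stabilizer G b, φ g ∈ stabilizer G b) {k : G} (hka : k • a = b) (hkb : k • b = a)
    (hrigid : ∀ ψ : MulAut (stabilizer G a),
      (∀ g : stabilizer G a, (g : G) ∈ stabilizer G b → ψ g = g) → ψ = 1) :
    ∀ g ∈ stabilizer G b, φ g = g := by
  let e : stabilizer G a ≃* stabilizer G b := stabilizerEquivStabilizer hka.symm
  have : Finite (stabilizer G b) := .of_equiv _ e.toEquiv
  obtain ⟨ψ, hψ⟩ := exists_mulAut_restrict hφ (stabilizer G b) hφb
  have he (g : stabilizer G a) (hg : (g : G) ∈ stabilizer G b) : (e g : G) ∈ stabilizer G a := by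
    rw [stabilizerEquivStabilizer_apply, MulAut.conj_apply, mem_stabilizer_iff, mul_smul, mul_smul,
      inv_smul_eq_iff.2 hkb.symm, mem_stabilizer_iff.1 hg, hkb]
  have hψ_one : ψ = 1 :=
    mulAut_eq_one_of_mulEquiv e (S := {g | (g : G) ∈ stabilizer G b}) hrigid fun g hg ↦
      Subtype.ext ((hψ _).trans (hφa _ (he g hg)))
  intro g hg
  rw [← hψ ⟨g, hg⟩, hψ_one, MulAut.one_apply]

end PairedSuborbits

/-! ### Distinguished suborbits -/

namespace IsFaithfulPrimitiveOn

variable {G Ω : Type*} [Group G] [MulAction G Ω] {H : Subgroup G} {s : Set Ω}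

section Pullback

variable {K Y : Type*} [Group K] [MulAction K Y] {f : K →* G} {i : Y →ₑ[f] Ω}

theorem faithfulSMul (h : IsFaithfulPrimitiveOn H s) (hfH : f.range = H)
    (his : Set.range i = s) (hf : Injective f) : FaithfulSMul K Y where
  eq_of_smul_eq_smul {k l} hkl := by
    subst hfH his
    have hker : f (l⁻¹ * k) = 1 := by
      refine h.1 _ ⟨_, rfl⟩ (Set.forall_mem_range.2 fun y ↦ ?_)
      rw [← map_smulₛₗ, mul_smul, hkl, inv_smul_smul]
    exact (inv_mul_eq_one.1 ((map_eq_one_iff f hf).1 hker)).symm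

theorem isPreprimitive (h : IsFaithfulPrimitiveOn H s) (hfH : f.range = H)
    (his : Set.range i = s) (hi : Injective i) : IsPreprimitive K Y where
  exists_smul_eq x y := by
    subst hfH his
    obtain ⟨_, ⟨k, rfl⟩, hk⟩ := h.2.1 (i x) ⟨x, rfl⟩ (i y) ⟨y, rfl⟩
    exact ⟨k, hi (by rw [map_smulₛₗ, hk])⟩
  isTrivialBlock_of_isBlock {B} hB := by
    subst hfH his
    have hblock : ∀ g ∈ f.range, (g • ·) '' (i '' B) = i '' B ∨
        Disjoint ((g • ·) '' (i '' B)) (i '' B) := by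
      rintro _ ⟨k, rfl⟩
      rw [Set.image_smul, ← image_smul_setₛₗ, Set.disjoint_image_iff hi]
      exact (isBlock_iff_smul_eq_or_disjoint.1 hB k).imp_left (congrArg _)
    exact (h.2.2 _ (Set.image_subset_range _ _) hblock).imp (Set.subsingleton_of_image hi B)
      fun hrange ↦ hi.image_injective (hrange.trans Set.image_univ.symm)

end Pullback

theorem faithfulSMul_orbit {c : Ω} (h : IsFaithfulPrimitiveOn H (orbit H c)) :
    FaithfulSMul H (orbit H c) :=
  h.faithfulSMul (i := ⟨Subtype.val, fun _ _ ↦ rfl⟩) H.range_subtype Subtype.range_coe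
    H.subtype_injective

theorem isPreprimitive_orbit {c : Ω} (h : IsFaithfulPrimitiveOn H (orbit H c)) :
    IsPreprimitive H (orbit H c) :=
  h.isPreprimitive (i := ⟨Subtype.val, fun _ _ ↦ rfl⟩) H.range_subtype Subtype.range_coe
    Subtype.val_injective

theorem faithfulSMul_of_top_univ (h : IsFaithfulPrimitiveOn (⊤ : Subgroup G) (Set.univ : Set Ω)) :
    FaithfulSMul G Ω :=
  h.faithfulSMul (f := MonoidHom.id G) (i := MulActionHom.id G)
    (MonoidHom.range_eq_top.2 surjective_id) Set.range_id injective_id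

theorem isPreprimitive_of_top_univ
    (h : IsFaithfulPrimitiveOn (⊤ : Subgroup G) (Set.univ : Set Ω)) : IsPreprimitive G Ω :=
  h.isPreprimitive (f := MonoidHom.id G) (i := MulActionHom.id G)
    (MonoidHom.range_eq_top.2 surjective_id) Set.range_id injective_id

end IsFaithfulPrimitiveOn

/-- Conditions (b) and (c) on the suborbit of `c`, i.e. its orbit under the stabilizer of `a`: the
stabilizer acts faithfully and primitively on it, and no other suborbit off `a` has the same
length. -/
def IsDistinguishedSuborbit (G : Type*) {Ω : Type*} [Group G] [MulAction G Ω] (a c : Ω) : Prop :=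
  IsFaithfulPrimitiveOn (stabilizer G a) (orbit (stabilizer G a) c) ∧
  ∀ c' : Ω, c' ≠ a →
    (orbit (stabilizer G a) c').ncard = (orbit (stabilizer G a) c).ncard →
    orbit (stabilizer G a) c' = orbit (stabilizer G a) c

namespace IsDistinguishedSuborbit

variable {G Ω : Type*} [Group G] [MulAction G Ω] {a b c : Ω}

theorem apply_eq_self (h : IsDistinguishedSuborbit G a c) (hca : c ≠ a)
    (hcyc : ¬ IsCyclic (stabilizer G a)) {σ : Ω →[stabilizer G a] Ω} (hσ : Injective σ)
    (hσa : σ a = a) : σ c = c := by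
  have := h.1.faithfulSMul_orbit
  have := h.1.isPreprimitive_orbit
  have hσc : σ c ≠ a := fun hc ↦ hca (hσ (hc.trans hσa.symm))
  have hmem : σ c ∈ orbit (stabilizer G a) c :=
    h.2 _ hσc (ncard_orbit_apply_of_injective σ hσ c) ▸ mem_orbit_self (σ c)
  by_contra hne
  exact hcyc (isCyclic_of_equivariant_ne_of_mem_orbit σ hmem hne)

theorem exists_swap [IsPretransitive G Ω] [Finite (stabilizer G a)]
    (h : IsDistinguishedSuborbit G a b) (hba : b ≠ a) : ∃ k : G, k • a = b ∧ k • b = a := by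
  obtain ⟨g, rfl⟩ := exists_smul_eq G a b
  have hne : g⁻¹ • a ≠ a := fun hg ↦ hba (inv_smul_eq_iff.1 hg).symm
  exact exists_swap_of_inv_smul_mem_orbit <|
    h.2 _ hne (ncard_orbit_stabilizer_inv_smul a g) ▸ mem_orbit_self (g⁻¹ • a)

end IsDistinguishedSuborbit

theorem aut_centralizing_point_stabilizer_general {G Ω : Type*} [Group G] [MulAction G Ω]
    {a b : Ω} [Finite (stabilizer G a)]
    (hfp : IsFaithfulPrimitiveOn (⊤ : Subgroup G) (Set.univ : Set Ω))
    (hba : b ≠ a) (hb : IsDistinguishedSuborbit G a b)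
    (hd : (∀ c : Ω, c ≠ a → IsDistinguishedSuborbit G a c) ∨
      ∀ ψ : MulAut (stabilizer G a),
        (∀ g : stabilizer G a, (g : G) ∈ stabilizer G b → ψ g = g) → ψ = 1)
    (hcyc : ¬ IsCyclic (stabilizer G a)) (φ : G →* G) (hφ : Injective φ)
    (hφa : ∀ g ∈ stabilizer G a, φ g = g) : φ = MonoidHom.id G := by
  have := hfp.faithfulSMul_of_top_univ
  have := hfp.isPreprimitive_of_top_univ
  obtain ⟨σ, hσ, hσa⟩ := exists_injective_equivariant_of_eqOn_stabilizer hφ hφa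
  let τ : Ω →[stabilizer G a] Ω :=
    { toFun := σ
      map_smul' := fun g x ↦ (map_smulₛₗ σ (g : G) x).trans (congrArg (· • σ x) (hφa g g.2)) }
  have hσ_fix {c : Ω} (hca : c ≠ a) (hc : IsDistinguishedSuborbit G a c) : σ c = c :=
    hc.apply_eq_self (σ := τ) hca hcyc hσ hσa
  rcases hd with hall | hrigid
  · refine eq_id_of_equivariant_eq_id σ fun x ↦ ?_
    by_cases hx : x = a
    · rwa [hx]
    · exact hσ_fix hx (hall x hx)
  · have := hb.1.faithfulSMul_orbit
    have : Nontrivial (stabilizer G a) :=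
      not_subsingleton_iff_nontrivial.1 fun _ ↦ hcyc inferInstance
    obtain ⟨k, hka, hkb⟩ := hb.exists_swap hba
    have hφb : ∀ g ∈ stabilizer G b, φ g ∈ stabilizer G b := fun g hg ↦
      hσ_fix hba hb ▸ map_mem_stabilizer σ hg
    exact eq_of_eqOn_stabilizers stabilizer_ne_of_faithfulSMul_orbit hφa
      (eqOn_stabilizer_of_swap hφ hφa hφb hka hkb hrigid)

end

/-- Lemma 2.4: Suppose the finite group `G` acts on the finite set `Ω`, `a ∈ Ω`, and:
(a) `G` is faithful and primitive on `Ω`; (b) the stabilizer `G_a` is faithful and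
primitive on some orbit `Ψ` of `G_a` on `Ω \ {a}`; (c) `Ψ` is the unique `G_a`-orbit of
its length; (d) either (d1) conditions (b),(c) hold for all `G_a`-orbits on `Ω \ {a}`,
or (d2) for all `b ∈ Ψ`, `C_{Aut(G_a)}(G_{ab}) = 1`; and (e) `G_a` is not cyclic.
Then `C_{Aut(G)}(G_a) = 1`. -/
theorem aut_centralizing_point_stabilizer {G Ω : Type*} [Group G] [Finite G] [Finite Ω]
    [MulAction G Ω] (a : Ω)
    (hfp : IsFaithfulPrimitiveOn (⊤ : Subgroup G) (Set.univ : Set Ω))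
    (Ψ : Set Ω) (b : Ω) (hb : b ≠ a)
    (hΨ : Ψ = MulAction.orbit ↥(MulAction.stabilizer G a) b)
    (hΨfp : IsFaithfulPrimitiveOn (MulAction.stabilizer G a) Ψ)
    (huniq : ∀ c : Ω, c ≠ a →
      (MulAction.orbit ↥(MulAction.stabilizer G a) c).ncard = Ψ.ncard →
      MulAction.orbit ↥(MulAction.stabilizer G a) c = Ψ)
    (hd : (∀ c : Ω, c ≠ a →
            IsFaithfulPrimitiveOn (MulAction.stabilizer G a)
              (MulAction.orbit ↥(MulAction.stabilizer G a) c) ∧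
            (∀ c' : Ω, c' ≠ a →
              (MulAction.orbit ↥(MulAction.stabilizer G a) c').ncard =
                (MulAction.orbit ↥(MulAction.stabilizer G a) c).ncard →
              MulAction.orbit ↥(MulAction.stabilizer G a) c' =
                MulAction.orbit ↥(MulAction.stabilizer G a) c)) ∨
          (∀ c ∈ Ψ, ∀ φ : MulAut ↥(MulAction.stabilizer G a),
            (∀ g : ↥(MulAction.stabilizer G a),
              (g : G) ∈ MulAction.stabilizer G c → φ g = g) → φ = 1))
    (hcyc : ¬ IsCyclic ↥(MulAction.stabilizer G a)) :
    ∀ φ : MulAut G, (∀ g ∈ MulAction.stabilizer G a, φ g = g) → φ = 1 := by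
  subst hΨ
  exact fun φ hφ ↦ MulEquiv.toMonoidHom_injective <|
    aut_centralizing_point_stabilizer_general hfp hb ⟨hΨfp, huniq⟩
      (hd.imp_right fun h ↦ h b (MulAction.mem_orbit_self b)) hcyc φ.toMonoidHom φ.injective hφ
end
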